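/- Let (R, 𝔪, k) be a commutative noetherian local ring and M a finitely generated R-module with AB-dim_R M < ∞. If Ext^n_R(M,M) = 0 for all n > 0, then M is free. -/

import Mathlib

/-!
Finite G-dimension is only used through its consequence `Ext^n(M,R) = 0` for `n ≫ 0`
(`ext_ring_vanishes_of_gdimLE`), that is, `R ∈ M^⊥`. The class `M^⊥` then contains `R` and `M`,
and it is closed under kernels of surjections from finite free modules onto its members
(`memPerp_ker`), so all syzygies of `M` lie in it.

Finiteness of `P_R(M)` gives some `p` such that `Ext^n(M,N) = 0` for every `n > p` and every
finitely generated `N ∈ M^⊥`. This bound descends to `p = 0` one step at a time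
(`ext_vanishes_descend`). Let `n ≥ 1` and suppose `Ext^{n+1}(M,-)` vanishes on the finitely generated
members of `M^⊥`. Then `Ext^n(M,F) → Ext^n(M,N)` is surjective for every finite free cover `F → N`
with `N ∈ M^⊥`. Take a minimal cover `F₀ → M` with kernel `K`, and a free cover `F₁ → K`. Both
`Ext^n(M,F₁) → Ext^n(M,K)` and `Ext^n(M,K) → Ext^n(M,F₀)` are surjective, the latter because
`Ext^n(M,M) = 0`. The composite is induced by a matrix with entries in the maximal ideal, so
Nakayama's lemma gives `Ext^n(M,R) = 0`, and therefore `Ext^n(M,N) = 0` for every `N ∈ M^⊥`.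

In particular `Ext^1(M,K) = 0` for the kernel `K` of a free cover of `M`. The cover splits, so `M` is
projective, hence free.

`ExtVanishes` is phrased with the derived-functor `Ext`; `extVanishes_iff` translates it to
`CategoryTheory.Abelian.Ext`, for which the long exact sequences are available.
-/

open CategoryTheory IsLocalRing

noncomputable section

universe u

variable (R : Type u) [CommRing R]

/-- The Ext group `Ext^n_R(M, N)` vanishes. -/
def ExtVanishes (M : Type u) [AddCommGroup M] [Module R M]
    (N : Type u) [AddCommGroup N] [Module R N] (n : ℕ) : Prop :=
  Subsingleton (((Ext R (ModuleCat.{u} R) n).obj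
    (Opposite.op (ModuleCat.of R M))).obj (ModuleCat.of R N))

/-- `N ∈ M^⊥`, i.e. `Ext^n_R(M,N) = 0` for all sufficiently large `n`. -/
def MemPerp (M : Type u) [AddCommGroup M] [Module R M]
    (N : Type u) [AddCommGroup N] [Module R N] : Prop :=
  ∃ d : ℕ, ∀ n ≥ d, ExtVanishes R M N n

/-- `P_R(M,N) = sup { n | Ext^n_R(M,N) ≠ 0 }`, an element of `{-∞} ∪ ℕ ∪ {∞}`;
it is `⊥ = -∞` when every `Ext^n_R(M,N)` vanishes. -/
def extP (M : Type u) [AddCommGroup M] [Module R M]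
    (N : Type u) [AddCommGroup N] [Module R N] : WithBot ℕ∞ :=
  sSup {x : WithBot ℕ∞ | ∃ n : ℕ, ¬ ExtVanishes R M N n ∧ x = (n : ℕ∞)}

/-- `P_R(M) = sup { P_R(M,N) | N ∈ M^⊥ }`, the sup being taken over all
finitely generated modules in `M^⊥`. -/
def extPsup (M : Type u) [AddCommGroup M] [Module R M] : WithBot ℕ∞ :=
  sSup {x : WithBot ℕ∞ | ∃ (N : Type u) (_ : AddCommGroup N) (_ : Module R N),
    Module.Finite R N ∧ MemPerp R M N ∧ x = extP R M N}

/-- A module `G` is totally reflexive if the biduality map `G → G**` is bijective and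
`Ext^n_R(G,R) = 0 = Ext^n_R(G*,R)` for all `n > 0`. -/
def IsTotallyReflexive (G : Type u) [AddCommGroup G] [Module R G] : Prop :=
  Function.Bijective (Module.Dual.eval R G) ∧
    (∀ n > 0, ExtVanishes R G R n) ∧ (∀ n > 0, ExtVanishes R (Module.Dual R G) R n)

/-- `G-dim_R M ≤ n`: there is a resolution of `M` of length `n` by finitely generated
totally reflexive modules. -/
def GdimLE : ℕ → ModuleCat.{u} R → Prop
  | 0, M => IsTotallyReflexive R M
  | n + 1, M => ∃ G : ModuleCat.{u} R, Module.Finite R G ∧ IsTotallyReflexive R G ∧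
      ∃ f : G →ₗ[R] M, Function.Surjective f ∧ GdimLE n (ModuleCat.of R (LinearMap.ker f))

/-- The G-dimension of `M`, as an element of `ℕ∞`. -/
def gdim (M : Type u) [AddCommGroup M] [Module R M] : ℕ∞ :=
  sInf {x : ℕ∞ | ∃ n : ℕ, GdimLE R n (ModuleCat.of R M) ∧ x = n}

/-- `pd_R M ≤ n`: there is a projective resolution of `M` of length `n` by finitely
generated projective modules. -/
def ProjDimLE : ℕ → ModuleCat.{u} R → Prop
  | 0, M => Module.Projective R M
  | n + 1, M => ∃ P : ModuleCat.{u} R, Module.Finite R P ∧ Module.Projective R P ∧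
      ∃ f : P →ₗ[R] M, Function.Surjective f ∧ ProjDimLE n (ModuleCat.of R (LinearMap.ker f))

/-- The projective dimension of `M`, as an element of `ℕ∞`. -/
def projdim (M : Type u) [AddCommGroup M] [Module R M] : ℕ∞ :=
  sInf {x : ℕ∞ | ∃ n : ℕ, ProjDimLE R n (ModuleCat.of R M) ∧ x = n}

/-- `injdim_R M ≤ n`: there is an injective resolution of `M` of length `n`. -/
def InjDimLE : ℕ → ModuleCat.{u} R → Prop
  | 0, M => Module.Injective R M
  | n + 1, M => ∃ I : ModuleCat.{u} R, Module.Injective R I ∧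
      ∃ f : M →ₗ[R] I, Function.Injective f ∧
        InjDimLE n (ModuleCat.of R (I ⧸ LinearMap.range f))

/-- `R` is Gorenstein: `R` has finite injective dimension as a module over itself. -/
def IsGorensteinRing : Prop := ∃ n : ℕ, InjDimLE R n (ModuleCat.of R R)

/-- `AB-dim_R M = sup { G-dim_R M, P_R(M) }`. -/
def abdim (M : Type u) [AddCommGroup M] [Module R M] : WithBot ℕ∞ :=
  max ((gdim R M : ℕ∞) : WithBot ℕ∞) (extPsup R M)

/-- The depth of `M`: the length of a maximal `M`-regular sequence contained in the
maximal ideal (expressed as the sup of lengths of such regular sequences). -/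
def rdepth [IsLocalRing R] (M : Type u) [AddCommGroup M] [Module R M] : ℕ∞ :=
  sSup {x : ℕ∞ | ∃ rs : List R, (∀ r ∈ rs, r ∈ maximalIdeal R) ∧
    RingTheory.Sequence.IsRegular M rs ∧ x = rs.length}

/-- `S` is a first syzygy `Ω M` of `M`: the kernel of a minimal free cover of `M`. -/
def IsSyzygyOf [IsLocalRing R] (S M : ModuleCat.{u} R) : Prop :=
  ∃ F : ModuleCat.{u} R, Module.Free R F ∧ Module.Finite R F ∧
    ∃ π : F →ₗ[R] M, Function.Surjective π ∧
      LinearMap.ker π ≤ (maximalIdeal R) • (⊤ : Submodule R F) ∧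
      Nonempty (S ≃ₗ[R] LinearMap.ker π)

/-- `S` is an `n`-th syzygy `Ω^n M` of `M`. -/
def IsNthSyzygyOf [IsLocalRing R] : ℕ → ModuleCat.{u} R → ModuleCat.{u} R → Prop
  | 0, S, M => Nonempty (S ≃ₗ[R] M)
  | n + 1, S, M => ∃ T : ModuleCat.{u} R, IsSyzygyOf R T M ∧ IsNthSyzygyOf n S T

end


section Aux

universe v

variable {R : Type v} [CommRing R]

open TensorProduct

/-! ### Comparison of the two definitions of `Ext` -/

/-- In positive degrees, both definitions of `Ext` are computed by a projective resolution
`P → M`: vanishing means that every cocycle `P_n → N` factors through `P_n → P_{n-1}`. -/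
lemma extVanishes_iff (M : Type v) [AddCommGroup M] [Module R M]
    (N : Type v) [AddCommGroup N] [Module R N] (n : ℕ) (hn : 0 < n) :
    ExtVanishes R M N n ↔ Subsingleton (Abelian.Ext (ModuleCat.of R M) (ModuleCat.of R N) n) := by
  obtain ⟨p, rfl⟩ : ∃ p, n = p + 1 := ⟨n - 1, by omega⟩
  let P : ProjectiveResolution (ModuleCat.of R M) := projectiveResolution _
  have key : ExtVanishes R M N (p + 1) ↔
      ∀ f : P.complex.X (p + 1) ⟶ ModuleCat.of R N, P.complex.d (p + 2) (p + 1) ≫ f = 0 →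
        ∃ g : P.complex.X p ⟶ ModuleCat.of R N, P.complex.d (p + 1) p ≫ g = f := by
    unfold ExtVanishes
    rw [← ModuleCat.isZero_iff_subsingleton,
      (P.isoExt (R := R) (p + 1) (ModuleCat.of R N)).isZero_iff,
      ← HomologicalComplex.exactAt_iff_isZero_homology,
      HomologicalComplex.exactAt_iff' _ p (p + 1) (p + 2) (by simp) (by simp),
      ShortComplex.moduleCat_exact_iff]
    exact Iff.rfl
  rw [key]
  constructor
  · intro h
    refine subsingleton_of_forall_eq 0 fun x => ?_
    obtain ⟨f, hf, rfl⟩ := P.extMk_surjective x (p + 2) rfl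
    exact (P.extMk_eq_zero_iff f (p + 2) rfl hf p rfl).2 (h f hf)
  · intro h f hf
    exact (P.extMk_eq_zero_iff f (p + 2) rfl hf p rfl).1 (Subsingleton.elim _ _)

/-- `MemPerp` may be tested in positive degrees, where the comparison applies. -/
lemma memPerp_iff (M : Type v) [AddCommGroup M] [Module R M]
    (N : Type v) [AddCommGroup N] [Module R N] :
    MemPerp R M N ↔ ∃ d : ℕ, ∀ n ≥ d, 0 < n →
      Subsingleton (Abelian.Ext (ModuleCat.of R M) (ModuleCat.of R N) n) := by
  constructor
  · rintro ⟨d, hd⟩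
    exact ⟨d, fun n hn h0 => (extVanishes_iff M N n h0).1 (hd n hn)⟩
  · rintro ⟨d, hd⟩
    exact ⟨d + 1, fun n hn => (extVanishes_iff M N n (by omega)).2 (hd n (by omega) (by omega))⟩

/-! ### Long exact sequences and the class `M^⊥` -/

lemma ext_ring_vanishes_of_gdimLE (d : ℕ) : ∀ (M : ModuleCat.{v} R), GdimLE R d M →
    ∀ n > d, Subsingleton (Abelian.Ext M (ModuleCat.of R R) n) := by
  induction d with
  | zero => exact fun M hM n hn => (extVanishes_iff M R n hn).1 (hM.2.1 n hn)
  | succ d ih =>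
    rintro M ⟨G, -, hG, f, hf, hK⟩ n hn
    obtain ⟨m, rfl⟩ : ∃ m, n = 1 + m := ⟨n - 1, by omega⟩
    have hS := LinearMap.shortExact_shortComplexKer hf
    have h₁ : Subsingleton (Abelian.Ext f.shortComplexKer.X₁ (ModuleCat.of R R) m) :=
      ih _ hK m (by omega)
    have h₂ : Subsingleton (Abelian.Ext f.shortComplexKer.X₂ (ModuleCat.of R R) (1 + m)) :=
      (extVanishes_iff G R (1 + m) (by omega)).1 (hG.2.1 _ (by omega))
    refine subsingleton_of_forall_eq 0 fun x => ?_
    obtain ⟨y, rfl⟩ := Abelian.Ext.contravariant_sequence_exact₃ hS _ x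
      (Subsingleton.elim _ _) rfl
    rw [Subsingleton.elim y 0, Abelian.Ext.comp_zero]

/-- If `Ext^n(X, R) = 0` then `Ext^n(X, R^b) = 0`. -/
lemma ext_pi_vanishes (X : ModuleCat.{v} R) (n b : ℕ)
    (h : Subsingleton (Abelian.Ext X (ModuleCat.of R R) n)) :
    Subsingleton (Abelian.Ext X (ModuleCat.of R (Fin b → R)) n) := by
  refine subsingleton_of_forall_eq 0 fun x => ?_
  have hid : 𝟙 (ModuleCat.of R (Fin b → R)) = ∑ j : Fin b,
      ModuleCat.ofHom (LinearMap.proj (R := R) (φ := fun _ : Fin b => R) j) ≫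
        ModuleCat.ofHom (LinearMap.single R (fun _ : Fin b => R) j) := by
    ext y i
    simp [ModuleCat.hom_sum, Finset.sum_apply, Pi.single_apply]
  rw [← Abelian.Ext.comp_mk₀_id x, hid, Abelian.Ext.mk₀_sum, Abelian.Ext.comp_sum]
  refine Finset.sum_eq_zero fun j _ => ?_
  rw [← Abelian.Ext.mk₀_comp_mk₀, ← Abelian.Ext.comp_assoc_of_second_deg_zero,
    Subsingleton.elim (x.comp _ _) 0, Abelian.Ext.zero_comp]

lemma ext_surjective_of_ker (X : ModuleCat.{v} R) {F N : Type v} [AddCommGroup F] [Module R F]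
    [AddCommGroup N] [Module R N] (f : F →ₗ[R] N) (hf : Function.Surjective f) (n : ℕ)
    (h : Subsingleton (Abelian.Ext X (ModuleCat.of R (LinearMap.ker f)) (n + 1)))
    (x : Abelian.Ext X (ModuleCat.of R N) n) :
    ∃ y : Abelian.Ext X (ModuleCat.of R F) n,
      y.comp (Abelian.Ext.mk₀ (ModuleCat.ofHom f)) (add_zero n) = x :=
  Abelian.Ext.covariant_sequence_exact₃ X (LinearMap.shortExact_shortComplexKer hf) x rfl
    (@Subsingleton.elim _ h _ _)

lemma memPerp_ker (M : Type v) [AddCommGroup M] [Module R M] {N : Type v} [AddCommGroup N]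
    [Module R N] {b : ℕ} (f : (Fin b → R) →ₗ[R] N) (hf : Function.Surjective f)
    (hR : MemPerp R M R) (hN : MemPerp R M N) : MemPerp R M (LinearMap.ker f) := by
  rw [memPerp_iff] at *
  obtain ⟨d, hd⟩ := hR
  obtain ⟨e, he⟩ := hN
  refine ⟨d + e + 2, fun n hn _ => ?_⟩
  obtain ⟨m, rfl⟩ : ∃ m, n = m + 1 := ⟨n - 1, by omega⟩
  have hS := LinearMap.shortExact_shortComplexKer hf
  have h₃ := he m (by omega) (by omega)
  have h₂ := ext_pi_vanishes _ (m + 1) b (hd (m + 1) (by omega) (by omega))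
  refine subsingleton_of_forall_eq 0 fun x => ?_
  obtain ⟨y, rfl⟩ := Abelian.Ext.covariant_sequence_exact₁ _ hS x
    (@Subsingleton.elim _ h₂ _ _) rfl
  rw [@Subsingleton.elim _ h₃ y 0, Abelian.Ext.zero_comp]

/-! ### Minimal covers and Nakayama's lemma -/

/-- A minimal free cover: lift a basis of `k ⊗ M`. -/
lemma exists_minimal_cover [IsLocalRing R] (M : Type v) [AddCommGroup M] [Module R M]
    [Module.Finite R M] : ∃ (a : ℕ) (f : (Fin a → R) →ₗ[R] M), Function.Surjective f ∧
      ∀ y, f y = 0 → ∀ i, y i ∈ maximalIdeal R := by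
  let b := Module.finBasis (ResidueField R) (ResidueField R ⊗[R] M)
  have hmk : ∀ z : ResidueField R ⊗[R] M, ∃ m : M, (1 : ResidueField R) ⊗ₜ[R] m = z :=
    fun z => TensorProduct.mk_surjective R M (ResidueField R) residue_surjective z
  choose g hg using fun i => hmk (b i)
  refine ⟨_, Fintype.linearCombination R g, ?_, fun y hy i => ?_⟩
  · rw [← LinearMap.range_eq_top, Fintype.range_linearCombination]
    exact span_eq_top_of_tmul_eq_basis g b hg
  · have h0 : ∑ j, residue R (y j) • b j = 0 := by
      have := congrArg (fun m : M => (1 : ResidueField R) ⊗ₜ[R] m) hy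
      simp only [Fintype.linearCombination_apply, TensorProduct.tmul_sum, TensorProduct.tmul_smul,
        hg, TensorProduct.tmul_zero] at this
      rw [← this]
      exact Finset.sum_congr rfl fun j _ => algebraMap_smul (ResidueField R) (y j) (b j)
    have := Fintype.linearIndependent_iff.1 b.linearIndependent _ h0 i
    exact (residue_eq_zero_iff _).1 this

/-- A linear form `R^b → R` with coefficients in `𝔪` sends `Ext^n(X, R^b)` into
`𝔪 Ext^n(X, R)`. -/
lemma comp_mem_smul_top [IsLocalRing R] (X : ModuleCat.{v} R) (n b : ℕ)
    (φ : (Fin b → R) →ₗ[R] R) (hφ : ∀ y, φ y ∈ maximalIdeal R)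
    (x : Abelian.Ext X (ModuleCat.of R (Fin b → R)) n) :
    x.comp (Abelian.Ext.mk₀ (ModuleCat.ofHom φ)) (add_zero n) ∈
      maximalIdeal R • (⊤ : Submodule R (Abelian.Ext X (ModuleCat.of R R) n)) := by
  have hsum : ModuleCat.ofHom φ = ∑ j : Fin b, φ (Pi.single j 1) •
      ModuleCat.ofHom (LinearMap.proj (R := R) (φ := fun _ : Fin b => R) j) := by
    ext j
    simp [ModuleCat.hom_sum, Pi.single_apply]
  rw [hsum, Abelian.Ext.mk₀_sum, Abelian.Ext.comp_sum]
  refine Submodule.sum_mem _ fun j _ => ?_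
  rw [Abelian.Ext.mk₀_smul, Abelian.Ext.comp_smul]
  exact Submodule.smul_mem_smul (hφ _) trivial

/-- The descent step: given `Ext^n(M,M) = 0`, if `Ext^{n+1}(M,-)` vanishes on the finitely generated members
of `M^⊥`, so does `Ext^n(M,-)`. Finite generation of `Ext^n(M,R)` makes Nakayama apply. -/
lemma ext_vanishes_descend [IsLocalRing R] [IsNoetherianRing R]
    (M : Type v) [AddCommGroup M] [Module R M] [Module.Finite R M] [Nontrivial M]
    (hR : MemPerp R M R) (hM : MemPerp R M M) (n : ℕ)
    (hMn : Subsingleton (Abelian.Ext (ModuleCat.of R M) (ModuleCat.of R M) n))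
    (h : ∀ (N : Type v) [AddCommGroup N] [Module R N] [Module.Finite R N], MemPerp R M N →
      Subsingleton (Abelian.Ext (ModuleCat.of R M) (ModuleCat.of R N) (n + 1)))
    (N : Type v) [AddCommGroup N] [Module R N] [Module.Finite R N] (hN : MemPerp R M N) :
    Subsingleton (Abelian.Ext (ModuleCat.of R M) (ModuleCat.of R N) n) := by
  have hRn : Subsingleton (Abelian.Ext (ModuleCat.of R M) (ModuleCat.of R R) n) := by
    obtain ⟨a, f, hf, hmin⟩ := exists_minimal_cover (R := R) M
    -- A nonzero module has a minimal cover of positive rank, so there is a coordinate to use.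
    obtain ⟨i⟩ : Nonempty (Fin a) := by
      by_contra hne
      rw [not_nonempty_iff] at hne
      exact not_subsingleton M hf.subsingleton
    obtain ⟨b, g, hg⟩ := Module.Finite.exists_fin' R (LinearMap.ker f)
    have hK := memPerp_ker M f hf hR hM
    have hL := memPerp_ker M g hg hR hK
    let φ : (Fin b → R) →ₗ[R] R := LinearMap.proj i ∘ₗ (LinearMap.ker f).subtype ∘ₗ g
    have htop : (⊤ : Submodule R (Abelian.Ext (ModuleCat.of R M) (ModuleCat.of R R) n)) ≤
        maximalIdeal R • ⊤ := by
      intro x _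
      -- `x` lifts along `R^a → R`, then along `K → R^a`, then along `R^b → K`.
      let x₁ : Abelian.Ext (ModuleCat.of R M) (ModuleCat.of R (Fin a → R)) n :=
        x.comp (Abelian.Ext.mk₀ (ModuleCat.ofHom (LinearMap.single R (fun _ => R) i))) (add_zero n)
      have hx₁ : x₁.comp (Abelian.Ext.mk₀ (ModuleCat.ofHom
          (LinearMap.proj (R := R) (φ := fun _ : Fin a => R) i))) (add_zero n) = x := by
        have : ModuleCat.ofHom (LinearMap.single R (fun _ : Fin a => R) i) ≫
            ModuleCat.ofHom (LinearMap.proj (R := R) (φ := fun _ : Fin a => R) i) =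
            𝟙 (ModuleCat.of R R) := by
          ext; simp
        rw [Abelian.Ext.comp_assoc_of_second_deg_zero, Abelian.Ext.mk₀_comp_mk₀, this,
          Abelian.Ext.comp_mk₀_id]
      obtain ⟨x₂, hx₂⟩ := Abelian.Ext.covariant_sequence_exact₂ (ModuleCat.of R M)
        (LinearMap.shortExact_shortComplexKer hf) x₁ (@Subsingleton.elim _ hMn _ _)
      obtain ⟨x₃, hx₃⟩ := ext_surjective_of_ker (ModuleCat.of R M) g hg n (h _ hL) x₂
      have := comp_mem_smul_top (ModuleCat.of R M) n b φ (fun y => hmin _ (g y).2 i) x₃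
      convert this using 1
      have hφ : ModuleCat.ofHom φ = ModuleCat.ofHom g ≫ ModuleCat.ofHom (LinearMap.ker f).subtype ≫
          ModuleCat.ofHom (LinearMap.proj (R := R) (φ := fun _ : Fin a => R) i) := rfl
      rw [hφ, ← Abelian.Ext.mk₀_comp_mk₀, ← Abelian.Ext.mk₀_comp_mk₀,
        ← Abelian.Ext.comp_assoc_of_second_deg_zero, hx₃,
        ← Abelian.Ext.comp_assoc_of_second_deg_zero]
      exact hx₁.symm.trans (congrArg (fun z => Abelian.Ext.comp z _ _) hx₂.symm)
    have hbot := Submodule.eq_bot_of_le_smul_of_le_jacobson_bot (maximalIdeal R) _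
      (Module.Finite.fg_top) htop (maximalIdeal_le_jacobson _)
    exact (Submodule.subsingleton_iff R).1 (subsingleton_of_bot_eq_top hbot.symm)
  obtain ⟨b, f, hf⟩ := Module.Finite.exists_fin' R N
  have hb := ext_pi_vanishes _ n b hRn
  refine subsingleton_of_forall_eq 0 fun x => ?_
  obtain ⟨y, rfl⟩ := ext_surjective_of_ker _ f hf n (h _ (memPerp_ker M f hf hR hN)) x
  rw [Subsingleton.elim y 0, Abelian.Ext.zero_comp]

/-! ### Finiteness of the AB-dimension -/

lemma exists_bound_of_extPsup_lt_top (M : Type v) [AddCommGroup M] [Module R M]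
    (h : extPsup R M < ⊤) : ∃ p : ℕ, ∀ (N : Type v) [AddCommGroup N] [Module R N]
      [Module.Finite R N], MemPerp R M N → ∀ n > p, ExtVanishes R M N n := by
  obtain ⟨p, hp⟩ : ∃ p : ℕ, extPsup R M ≤ ((p : ℕ∞) : WithBot ℕ∞) := by
    generalize extPsup R M = c at h
    induction c with
    | bot => exact ⟨0, bot_le⟩
    | coe c =>
      have hc : c ≠ ⊤ := by
        rintro rfl
        exact lt_irrefl _ h
      obtain ⟨p, rfl⟩ := ENat.ne_top_iff_exists.1 hc
      exact ⟨p, le_rfl⟩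
  refine ⟨p, fun N _ _ _ hN n hn => ?_⟩
  by_contra hne
  have h₁ : ((n : ℕ∞) : WithBot ℕ∞) ≤ extP R M N := le_sSup ⟨n, hne, rfl⟩
  have h₂ : extP R M N ≤ extPsup R M := le_sSup ⟨N, _, _, ‹_›, hN, rfl⟩
  have h₃ := WithBot.coe_le_coe.1 ((h₁.trans h₂).trans hp)
  exact absurd (Nat.cast_le.1 h₃) (by omega)

lemma exists_gdimLE_of_gdim_lt_top (M : Type v) [AddCommGroup M] [Module R M]
    (h : gdim R M < ⊤) : ∃ d : ℕ, GdimLE R d (ModuleCat.of R M) := by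
  obtain ⟨_, ⟨d, hd, -⟩, -⟩ := sInf_lt_iff.1 h
  exact ⟨d, hd⟩

end Aux


/-- Theorem 1.3: if `M` is a finitely generated module with `AB-dim_R M < ∞` and
`Ext^n_R(M,M) = 0` for all `n > 0`, then `M` is free. -/
theorem statement9 (R : Type u) [CommRing R] [IsLocalRing R] [IsNoetherianRing R]
    (M : Type u) [AddCommGroup M] [Module R M] [Module.Finite R M]
    (h : abdim R M < ⊤) (hext : ∀ n > 0, ExtVanishes R M M n) :
    Module.Free R M := by
  cases subsingleton_or_nontrivial M
  · infer_instance
  obtain ⟨hg, hP⟩ := max_lt_iff.1 h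
  obtain ⟨d, hd⟩ := exists_gdimLE_of_gdim_lt_top M
    (WithBot.coe_lt_coe.1 (hg : ((gdim R M : ℕ∞) : WithBot ℕ∞) < ((⊤ : ℕ∞) : WithBot ℕ∞)))
  have hR : MemPerp R M R := (memPerp_iff M R).2
    ⟨d + 1, fun n hn _ => ext_ring_vanishes_of_gdimLE d _ hd n hn⟩
  have hM : MemPerp R M M := ⟨1, fun n hn => hext n hn⟩
  obtain ⟨p, hp⟩ := exists_bound_of_extPsup_lt_top M hP
  -- Descending induction from degree `p + 1` to degree `1`.
  have key : ∀ q : ℕ, q ≤ p → ∀ (N : Type u) [AddCommGroup N] [Module R N] [Module.Finite R N],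
      MemPerp R M N →
        Subsingleton (Abelian.Ext (ModuleCat.of R M) (ModuleCat.of R N) (p - q + 1)) := by
    intro q
    induction q with
    | zero =>
      intro _ N _ _ _ hN
      exact (extVanishes_iff M N _ (by omega)).1 (hp N hN _ (by omega))
    | succ q ih =>
      intro hq
      have ih' := ih (by omega)
      rw [show p - q = p - (q + 1) + 1 by omega] at ih'
      exact ext_vanishes_descend M hR hM _
        ((extVanishes_iff M M _ (by omega)).1 (hext _ (by omega))) ih'
  obtain ⟨b, f, hf⟩ := Module.Finite.exists_fin' R M
  have h₁ := key p le_rfl _ (memPerp_ker M f hf hR hM)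
  rw [Nat.sub_self] at h₁
  -- The identity of `M` lifts along the free cover, which therefore splits.
  obtain ⟨y, hy⟩ := ext_surjective_of_ker (ModuleCat.of R M) f hf 0 h₁
    (Abelian.Ext.mk₀ (𝟙 (ModuleCat.of R M)))
  obtain ⟨s, rfl⟩ := (Abelian.Ext.mk₀_bijective _ _).2 y
  rw [Abelian.Ext.mk₀_comp_mk₀, (Abelian.Ext.mk₀_bijective _ _).1.eq_iff] at hy
  have hproj : Module.Projective R M := Module.Projective.of_split s.hom f
    (by simpa using congrArg ModuleCat.Hom.hom hy)
  exact Module.free_of_flat_of_isLocalRing
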